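/- For a C_3-frame A, consider the multiset Φ(A) = {⟨φ,a⟩ : a ∈ A} of six values. Say A is of type I if Φ(A) ⊆ {1/2, −1/2}; of type II_0 if Φ(A) = {0,0,0,0,0,0}; of type II_1 if Φ(A) = {1, −1, 0, 0, 0, 0}; of type II_2 if Φ(A) = {1, 1, −1, −1, 0, 0}. Then every C_3-frame is of exactly one of these four types; the numbers of C_3-frames of types I, II_0, II_1, II_2 are 4032, 1260, 1890 and 378 respectively; and each of the four sets of frames of a given type is a single orbit under the action of W(E7) given by A ↦ w(A). -/

import Mathlib

noncomputable section

/-- `V = ℂ^8`. -/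
abbrev V8 : Type := Fin 8 → ℂ

/-- The symmetric bilinear form `⟨x,y⟩ = ∑ᵢ xᵢ yᵢ` on `V`. -/
def ip (x y : V8) : ℂ := ∑ i, x i * y i

/-- `φ = (1/2, …, 1/2)`. -/
def phi8 : V8 := fun _ => (1 : ℂ) / 2

/-- `x` has all coordinates in `ℤ`. -/
def IsIntVec (x : V8) : Prop := ∀ i, ∃ n : ℤ, x i = (n : ℂ)

/-- The `E₈` root lattice `P = {a ∈ ℤ⁸ ∪ (φ + ℤ⁸) : ⟨φ,a⟩ ∈ ℤ}`. -/
def E8lat : Set V8 :=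
  {a | (IsIntVec a ∨ IsIntVec (a - phi8)) ∧ ∃ n : ℤ, ip phi8 a = (n : ℂ)}

/-- A `C_l`-frame relative to `P`: a set `A = {±a₀, …, ±a_{l-1}}` with
`⟨aᵢ,aⱼ⟩ = δᵢⱼ`, `aᵢ ± aⱼ ∈ P` for `i < j`, and `2aᵢ ∈ P`. -/
def IsClFrame (l : ℕ) (A : Set V8) : Prop :=
  ∃ a : Fin l → V8,
    A = Set.range a ∪ Set.range (fun i => -a i) ∧
    (∀ i j, ip (a i) (a j) = if i = j then 1 else 0) ∧
    (∀ i j, i < j → a i + a j ∈ E8lat ∧ a i - a j ∈ E8lat) ∧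
    (∀ i, (2 : ℂ) • a i ∈ E8lat)

/-- `w` is the reflection `r_α(v) = v − ⟨α,v⟩α` for some root `α ∈ Δ(E₇)`,
i.e. `α ∈ Δ(E₈)` with `⟨φ,α⟩ = 0`. -/
def IsE7Reflection (w : V8 ≃ₗ[ℂ] V8) : Prop :=
  ∃ α, α ∈ E8lat ∧ ip α α = 2 ∧ ip phi8 α = 0 ∧ ∀ v, w v = v - ip α v • α

/-- The Weyl group `W(E₇)`, generated by the reflections in roots of `Δ(E₇)`. -/
def WE7 : Subgroup (V8 ≃ₗ[ℂ] V8) := Subgroup.closure {w | IsE7Reflection w}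

/-- Type I: `Φ(A) ⊆ {1/2, −1/2}`. -/
def C3TypeI (A : Set V8) : Prop :=
  ∀ a ∈ A, ip phi8 a = 1 / 2 ∨ ip phi8 a = -(1 / 2)

/-- Type II₀: `Φ(A) = {0,0,0,0,0,0}`. -/
def C3TypeII0 (A : Set V8) : Prop := ∀ a ∈ A, ip phi8 a = 0

/-- Type II₁: `Φ(A) = {1, −1, 0, 0, 0, 0}` as a multiset. -/
def C3TypeII1 (A : Set V8) : Prop :=
  {a ∈ A | ip phi8 a = 1}.ncard = 1 ∧ {a ∈ A | ip phi8 a = -1}.ncard = 1 ∧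
  {a ∈ A | ip phi8 a = 0}.ncard = 4

/-- Type II₂: `Φ(A) = {1, 1, −1, −1, 0, 0}` as a multiset. -/
def C3TypeII2 (A : Set V8) : Prop :=
  {a ∈ A | ip phi8 a = 1}.ncard = 2 ∧ {a ∈ A | ip phi8 a = -1}.ncard = 2 ∧
  {a ∈ A | ip phi8 a = 0}.ncard = 2

/-!
A vector `a` with `⟨a, a⟩ = 1` and `2a ∈ P` determines modulo `P` the `C₈`-frame containing it: the
coordinates, in that frame, of any other such vector congruent to `a` are integers whose squares
sum to `1`. Hence every `C₃`-frame consists of three pairs from a unique `C₈`-frame.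

The group `W(E₇)` fixes `φ`, and every frame vector is conjugate to a dominant one. The norm of the
projection of a vector to the span of `E₇` is given by the inverse Cartan matrix, whose entries are
positive, so there are few dominant frame vectors; each is conjugate up to sign to a member of one
of two `C₈`-frames `{±vᵢ}`, where the `vᵢ` can be chosen such that the values `⟨φ, vᵢ⟩` are
`1/2, …, 1/2` and `1, 1, 0, …, 0`, respectively. If `⟨φ, vᵢ⟩ = ⟨φ, vⱼ⟩`, then `vᵢ - vⱼ` is a root of
`E₇` and its reflection exchanges `vᵢ` and `vⱼ` and fixes the other `vₖ`, so the orbit of a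
`C₃`-frame is determined by the values of `φ` on it.

The pairs of a `C₃`-frame `A` of given type and `a ∈ A` with `⟨φ, a⟩` maximal can be counted in two
ways: `4032 · 3 = 576 · 21`, `1260 · 6 = 756 · 10`, `1890 · 1 = 126 · 15` and `378 · 2 = 126 · 6`.
-/

/-! ### The `E₈` lattice -/

lemma ip_eq_dotProduct (x y : V8) : ip x y = x ⬝ᵥ y := rfl

/-- The vector `z / 2`. The lattice `P` is studied through the integral vectors `z = 2p`. -/
def half : (Fin 8 → ℤ) →+ V8 where
  toFun z i := z i / 2
  map_zero' := by ext; simp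
  map_add' y z := by ext; simp [add_div]

lemma half_apply (z : Fin 8 → ℤ) (i : Fin 8) : half z i = z i / 2 := rfl

lemma half_injective : Function.Injective half := fun y z h => by
  ext i
  simpa [half_apply] using congrFun h i

/-- `z` is the double of a vector of the `E₈` lattice. -/
abbrev IsDoubledE8 (z : Fin 8 → ℤ) : Prop := (∀ i, 2 ∣ z i - z 0) ∧ 4 ∣ ∑ i, z i

lemma half_dotProduct_half (y z : Fin 8 → ℤ) : half y ⬝ᵥ half z = ((y ⬝ᵥ z : ℤ) : ℂ) / 4 := by
  simp only [dotProduct, half_apply, Int.cast_sum, Int.cast_mul, Finset.sum_div]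
  exact Finset.sum_congr rfl fun i _ => by ring

lemma phi8_eq_half_one : phi8 = half 1 := by
  funext i
  simp [phi8, half_apply]

lemma phi8_dotProduct_half (z : Fin 8 → ℤ) : phi8 ⬝ᵥ half z = ((∑ i, z i : ℤ) : ℂ) / 4 := by
  rw [phi8_eq_half_one, half_dotProduct_half, one_dotProduct]

lemma half_mem_E8lat {z : Fin 8 → ℤ} (hz : IsDoubledE8 z) : half z ∈ E8lat := by
  obtain ⟨hpar, m, hm⟩ := hz
  refine ⟨?_, m, by rw [ip_eq_dotProduct, phi8_dotProduct_half, hm]; push_cast; ring⟩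
  rcases Int.even_or_odd' (z 0) with ⟨k, hk | hk⟩
  · refine Or.inl fun i => ?_
    obtain ⟨l, hl⟩ := hpar i
    refine ⟨l + k, ?_⟩
    rw [half_apply, show z i = 2 * (l + k) by lia]
    push_cast
    ring
  · refine Or.inr fun i => ?_
    obtain ⟨l, hl⟩ := hpar i
    refine ⟨l + k, ?_⟩
    rw [Pi.sub_apply, half_apply, phi8, show z i = 2 * (l + k) + 1 by lia]
    push_cast
    ring

lemma exists_half_of_mem_E8lat {p : V8} (hp : p ∈ E8lat) : ∃ z, IsDoubledE8 z ∧ p = half z := by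
  obtain ⟨hcoord, m, hm⟩ := hp
  obtain ⟨z, rfl, hpar⟩ : ∃ z, p = half z ∧ ∀ i, 2 ∣ z i - z 0 := by
    rcases hcoord with hcoord | hcoord
    · choose n hn using hcoord
      refine ⟨fun i => 2 * n i, funext fun i => ?_, fun i => ⟨n i - n 0, by ring⟩⟩
      rw [hn, half_apply]
      push_cast
      ring
    · choose n hn using hcoord
      refine ⟨fun i => 2 * n i + 1, funext fun i => ?_, fun i => ⟨n i - n 0, by ring⟩⟩
      rw [eq_add_of_sub_eq (hn i), half_apply, phi8]
      push_cast
      ring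
  refine ⟨z, ⟨hpar, m, ?_⟩, rfl⟩
  rw [ip_eq_dotProduct, phi8_dotProduct_half, div_eq_iff (by norm_num), mul_comm] at hm
  exact_mod_cast hm

lemma half_mem_E8lat_iff {z : Fin 8 → ℤ} : half z ∈ E8lat ↔ IsDoubledE8 z := by
  refine ⟨fun h => ?_, half_mem_E8lat⟩
  obtain ⟨y, hy, hyz⟩ := exists_half_of_mem_E8lat h
  rwa [half_injective hyz]

/-- The `E₈` lattice as a subgroup of `V`. -/
def e8Lattice : AddSubgroup V8 where
  carrier := E8lat
  zero_mem' := map_zero half ▸ half_mem_E8lat (by decide)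
  add_mem' {p q} hp hq := by
    obtain ⟨y, ⟨hy, hy'⟩, rfl⟩ := exists_half_of_mem_E8lat hp
    obtain ⟨z, ⟨hz, hz'⟩, rfl⟩ := exists_half_of_mem_E8lat hq
    rw [← map_add]
    refine half_mem_E8lat ⟨fun i => ?_, ?_⟩
    · rw [Pi.add_apply, Pi.add_apply, add_sub_add_comm]
      exact dvd_add (hy i) (hz i)
    · simp only [Pi.add_apply, Finset.sum_add_distrib]
      exact dvd_add hy' hz'
  neg_mem' {p} hp := by
    obtain ⟨y, ⟨hy, hy'⟩, rfl⟩ := exists_half_of_mem_E8lat hp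
    rw [← map_neg]
    refine half_mem_E8lat ⟨fun i => ?_, ?_⟩
    · rw [Pi.neg_apply, Pi.neg_apply, neg_sub_neg]
      exact (dvd_sub_comm).1 (hy i)
    · simpa only [Pi.neg_apply, Finset.sum_neg_distrib, dvd_neg] using hy'

lemma mem_e8Lattice {p : V8} : p ∈ e8Lattice ↔ p ∈ E8lat := Iff.rfl

lemma IsDoubledE8.eight_dvd {z : Fin 8 → ℤ} (hz : IsDoubledE8 z) : 8 ∣ z ⬝ᵥ z := by
  obtain ⟨hpar, hsum⟩ := hz
  choose k hk using hpar
  obtain ⟨c, hc⟩ : ∃ c, z 0 = c := ⟨_, rfl⟩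
  obtain rfl : z = fun i => c + 2 * k i := funext fun i => by rw [← hk, hc]; ring
  have hk_even : 2 ∣ ∑ i, k i := by
    simp only [Finset.sum_add_distrib, Finset.sum_const, ← Finset.mul_sum, Finset.card_univ,
      Fintype.card_fin] at hsum
    lia
  have hk_sq : 2 ∣ ∑ i, k i ^ 2 - ∑ i, k i := by
    rw [← Finset.sum_sub_distrib]
    refine Finset.dvd_sum fun i _ => ?_
    rw [sq, ← mul_sub_one]
    exact (Int.even_mul_pred_self _).two_dvd
  have hsq : (fun i => c + 2 * k i) ⬝ᵥ (fun i => c + 2 * k i) =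
      8 * c ^ 2 + 4 * (c * ∑ i, k i + ∑ i, k i ^ 2) := by
    simp only [dotProduct, Fin.sum_univ_eight]
    ring
  have := hk_even.mul_left c
  lia

lemma exists_dotProduct_self_eq {p : V8} (hp : p ∈ e8Lattice) : ∃ n : ℤ, p ⬝ᵥ p = 2 * n := by
  obtain ⟨z, hz, rfl⟩ := exists_half_of_mem_E8lat hp
  obtain ⟨n, hn⟩ := hz.eight_dvd
  refine ⟨n, ?_⟩
  rw [half_dotProduct_half, hn]
  push_cast
  ring

lemma exists_dotProduct_eq {p q : V8} (hp : p ∈ e8Lattice) (hq : q ∈ e8Lattice) :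
    ∃ n : ℤ, p ⬝ᵥ q = n := by
  obtain ⟨l, hl⟩ := exists_dotProduct_self_eq hp
  obtain ⟨m, hm⟩ := exists_dotProduct_self_eq hq
  obtain ⟨n, hn⟩ := exists_dotProduct_self_eq (add_mem hp hq)
  refine ⟨n - l - m, ?_⟩
  rw [add_dotProduct, dotProduct_add, dotProduct_add, hl, hm, dotProduct_comm q p] at hn
  push_cast
  linear_combination hn / 2

lemma IsDoubledE8.four_dvd_dotProduct {y z : Fin 8 → ℤ} (hy : IsDoubledE8 y)
    (hz : IsDoubledE8 z) : 4 ∣ y ⬝ᵥ z := by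
  obtain ⟨n, hn⟩ := exists_dotProduct_eq (half_mem_E8lat hy) (half_mem_E8lat hz)
  rw [half_dotProduct_half, div_eq_iff (by norm_num)] at hn
  exact ⟨n, by rw [mul_comm]; exact_mod_cast hn⟩

/-! ### The Weyl group -/

/-- The reflection `v ↦ v - ⟨α, v⟩ α` in a vector of norm `2`. -/
def rootReflection (α : V8) (hα : α ⬝ᵥ α = 2) : V8 ≃ₗ[ℂ] V8 :=
  Module.reflection (f := dotProductBilin ℂ ℂ α) (x := α) hα

lemma rootReflection_apply {α : V8} (hα : α ⬝ᵥ α = 2) (v : V8) :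
    rootReflection α hα v = v - (α ⬝ᵥ v) • α := rfl

lemma rootReflection_mem_WE7 {α : V8} (hα : α ⬝ᵥ α = 2) (hmem : α ∈ e8Lattice)
    (hphi : phi8 ⬝ᵥ α = 0) : rootReflection α hα ∈ WE7 :=
  Subgroup.subset_closure ⟨α, hmem, hα, hphi, rootReflection_apply hα⟩

/-- The isometries of `V` that fix `φ` and preserve the `E₈` lattice. Invariants of `W(E₇)` are
derived from membership in this group. -/
def phiIsometries : Subgroup (V8 ≃ₗ[ℂ] V8) where
  carrier := {w | (∀ x y, w x ⬝ᵥ w y = x ⬝ᵥ y) ∧ w phi8 = phi8 ∧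
    ∀ p, w p ∈ e8Lattice ↔ p ∈ e8Lattice}
  one_mem' := ⟨fun _ _ => rfl, rfl, fun _ => Iff.rfl⟩
  mul_mem' {w w'} hw hw' := ⟨fun x y => (hw.1 _ _).trans (hw'.1 _ _),
    (congrArg w hw'.2.1).trans hw.2.1, fun p => (hw.2.2 _).trans (hw'.2.2 _)⟩
  inv_mem' {w} hw := by
    have apply_inv : ∀ x, w (w⁻¹ x) = x := w.apply_symm_apply
    refine ⟨fun x y => ?_, (w.symm_apply_eq).2 hw.2.1.symm, fun p => ?_⟩
    · rw [← hw.1, apply_inv, apply_inv]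
    · rw [← hw.2.2, apply_inv]

lemma rootReflection_mem_phiIsometries {α : V8} (hα : α ⬝ᵥ α = 2) (hmem : α ∈ e8Lattice)
    (hphi : phi8 ⬝ᵥ α = 0) : rootReflection α hα ∈ phiIsometries := by
  have maps_lattice : ∀ p ∈ e8Lattice, rootReflection α hα p ∈ e8Lattice := fun p hp => by
    obtain ⟨n, hn⟩ := exists_dotProduct_eq hmem hp
    rw [rootReflection_apply, hn, Int.cast_smul_eq_zsmul]
    exact sub_mem hp (zsmul_mem hmem n)
  refine ⟨fun x y => ?_, ?_, fun p => ⟨fun hp => ?_, maps_lattice p⟩⟩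
  · simp only [rootReflection_apply, sub_dotProduct, dotProduct_sub, smul_dotProduct,
      dotProduct_smul, smul_eq_mul, hα, dotProduct_comm x α]
    ring
  · rw [rootReflection_apply, dotProduct_comm, hphi, zero_smul, sub_zero]
  · have involutive : rootReflection α hα (rootReflection α hα p) = p :=
      Module.involutive_reflection hα p
    exact involutive ▸ maps_lattice _ hp

lemma WE7_le_phiIsometries : WE7 ≤ phiIsometries := by
  refine (Subgroup.closure_le _).2 ?_
  rintro w ⟨α, hmem, hα, hphi, hw⟩
  obtain rfl : w = rootReflection α hα := LinearEquiv.ext hw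
  exact rootReflection_mem_phiIsometries hα hmem hphi

section Invariance

variable {w : V8 ≃ₗ[ℂ] V8} (hw : w ∈ WE7)
include hw

lemma dotProduct_map_of_mem_WE7 (x y : V8) : w x ⬝ᵥ w y = x ⬝ᵥ y :=
  (WE7_le_phiIsometries hw).1 x y

lemma phi8_dotProduct_map_of_mem_WE7 (v : V8) : phi8 ⬝ᵥ w v = phi8 ⬝ᵥ v := by
  rw [← dotProduct_map_of_mem_WE7 hw phi8 v, (WE7_le_phiIsometries hw).2.1]

lemma map_mem_e8Lattice_iff_of_mem_WE7 {p : V8} : w p ∈ e8Lattice ↔ p ∈ e8Lattice :=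
  (WE7_le_phiIsometries hw).2.2 p

end Invariance

/-! ### Orthonormal families and frames -/

/-- The vectors that occur in frames. -/
def IsFrameVector (a : V8) : Prop := a ⬝ᵥ a = 1 ∧ (2 : ℂ) • a ∈ e8Lattice

lemma isFrameVector_neg_iff {a : V8} : IsFrameVector (-a) ↔ IsFrameVector a := by
  rw [IsFrameVector, neg_dotProduct_neg, smul_neg, neg_mem_iff, IsFrameVector]

lemma isFrameVector_map_iff {w : V8 ≃ₗ[ℂ] V8} (hw : w ∈ WE7) {a : V8} :
    IsFrameVector (w a) ↔ IsFrameVector a := by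
  rw [IsFrameVector, dotProduct_map_of_mem_WE7 hw, ← map_smul,
    map_mem_e8Lattice_iff_of_mem_WE7 hw, IsFrameVector]

/-- Orthonormality for the bilinear form (no complex conjugation is involved). -/
def IsOrthonormal {ι : Type*} [DecidableEq ι] (v : ι → V8) : Prop :=
  ∀ i j, v i ⬝ᵥ v j = if i = j then 1 else 0

/-- A family `v` for which `{±v i}` is a frame; for eight vectors this is a `C₈`-frame. -/
structure IsFrameFamily {ι : Type*} [DecidableEq ι] (v : ι → V8) : Prop where
  orthonormal : IsOrthonormal v
  sub_mem : ∀ i j, v i - v j ∈ e8Lattice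
  two_smul_mem : ∀ i, (2 : ℂ) • v i ∈ e8Lattice

/-- The set `{±v j : j ∈ S}`. -/
def frameOf {ι : Type*} (v : ι → V8) (S : Finset ι) : Set V8 := {a | ∃ j ∈ S, a = v j ∨ a = -v j}

section FrameOf

variable {ι : Type*} {v : ι → V8}

lemma image_frameOf (w : V8 ≃ₗ[ℂ] V8) (v : ι → V8) (S : Finset ι) :
    w '' frameOf v S = frameOf (w ∘ v) S := by
  ext x
  constructor
  · rintro ⟨_, ⟨j, hj, rfl | rfl⟩, rfl⟩
    exacts [⟨j, hj, .inl rfl⟩, ⟨j, hj, .inr (map_neg w _)⟩]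
  · rintro ⟨j, hj, rfl | rfl⟩
    exacts [⟨v j, ⟨j, hj, .inl rfl⟩, rfl⟩, ⟨-v j, ⟨j, hj, .inr rfl⟩, map_neg w _⟩]

lemma frameOf_map_equiv (v : ι → V8) (σ : Equiv.Perm ι) (S : Finset ι) :
    frameOf v (S.map σ.toEmbedding) = frameOf (v ∘ σ) S := by
  simp only [frameOf, Finset.mem_map_equiv, Function.comp_apply]
  ext x
  exact σ.symm.exists_congr fun j => by simp

lemma range_union_range_neg [Fintype ι] (v : ι → V8) :
    Set.range v ∪ Set.range (fun i => -v i) = frameOf v Finset.univ := by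
  ext x
  simp only [frameOf, Set.mem_union, Set.mem_range, Finset.mem_univ, true_and, Set.mem_ofPred_eq,
    exists_or, eq_comm]

lemma forall_mem_frameOf {S : Finset ι} {p : V8 → Prop} :
    (∀ a ∈ frameOf v S, p a) ↔ ∀ j ∈ S, p (v j) ∧ p (-v j) := by
  simp only [frameOf, Set.mem_ofPred_eq, forall_exists_index, and_imp, or_imp, forall_and]
  aesop

lemma neg_mem_frameOf {S : Finset ι} {a : V8} (ha : a ∈ frameOf v S) : -a ∈ frameOf v S := by
  obtain ⟨j, hj, rfl | rfl⟩ := ha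
  exacts [⟨j, hj, .inr rfl⟩, ⟨j, hj, .inl (neg_neg _)⟩]

variable [DecidableEq ι]

namespace IsOrthonormal

lemma eq_of_eq_or_eq_neg (hv : IsOrthonormal v) {i j : ι} (h : v i = v j ∨ v i = -v j) :
    i = j := by
  by_contra hij
  have hdot := hv i j
  rcases h with h | h <;> simp [h, neg_dotProduct, hv j j, hij] at hdot

lemma injective (hv : IsOrthonormal v) : Function.Injective v := fun _ _ h =>
  hv.eq_of_eq_or_eq_neg (.inl h)

lemma ne_neg (hv : IsOrthonormal v) (i j : ι) : v i ≠ -v j := fun h => by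
  obtain rfl := hv.eq_of_eq_or_eq_neg (.inr h)
  have hdot := hv i i
  nth_rw 1 [h] at hdot
  norm_num [neg_dotProduct, hv i i] at hdot

lemma mem_frameOf_iff (hv : IsOrthonormal v) {S : Finset ι} {j : ι} :
    v j ∈ frameOf v S ↔ j ∈ S :=
  ⟨fun ⟨_, hk, h⟩ => hv.eq_of_eq_or_eq_neg h ▸ hk, fun hj => ⟨j, hj, .inl rfl⟩⟩

lemma frameOf_injective (hv : IsOrthonormal v) : Function.Injective (frameOf v) := fun S T h => by
  ext j
  rw [← hv.mem_frameOf_iff, h, hv.mem_frameOf_iff]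

lemma ncard_frameOf_sep (hv : IsOrthonormal v) (S : Finset ι) (p : V8 → Prop)
    [DecidablePred p] : {a ∈ frameOf v S | p a}.ncard =
      (S.filter fun j => p (v j)).card + (S.filter fun j => p (-v j)).card := by
  classical
  have hset : {a ∈ frameOf v S | p a} = ((S.filter fun j => p (v j)).image v ∪
      (S.filter fun j => p (-v j)).image (-v) : Finset V8) := by
    ext a
    simp only [frameOf, Set.mem_ofPred_eq, Finset.coe_union, Finset.coe_image, Finset.coe_filter,
      Set.mem_union, Set.mem_image, Pi.neg_apply]
    constructor
    · rintro ⟨⟨j, hj, rfl | rfl⟩, hp⟩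
      exacts [.inl ⟨j, ⟨hj, hp⟩, rfl⟩, .inr ⟨j, ⟨hj, hp⟩, rfl⟩]
    · rintro (⟨j, ⟨hj, hp⟩, rfl⟩ | ⟨j, ⟨hj, hp⟩, rfl⟩)
      exacts [⟨⟨j, hj, .inl rfl⟩, hp⟩, ⟨⟨j, hj, .inr rfl⟩, hp⟩]
  rw [hset, Set.ncard_coe_finset, Finset.card_union_of_disjoint,
    Finset.card_image_of_injective _ hv.injective,
    Finset.card_image_of_injective (f := -v) _ (neg_injective.comp hv.injective)]
  rw [Finset.disjoint_left]
  simp only [Finset.mem_image, not_exists, not_and, forall_exists_index, Pi.neg_apply]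
  rintro _ j ⟨-, rfl⟩ k - h
  exact hv.ne_neg j k h.symm

lemma ncard_frameOf (hv : IsOrthonormal v) (S : Finset ι) : (frameOf v S).ncard = 2 * S.card := by
  simpa [two_mul] using hv.ncard_frameOf_sep S fun _ => True

end IsOrthonormal

namespace IsFrameFamily

lemma add_mem (hv : IsFrameFamily v) (i j : ι) : v i + v j ∈ e8Lattice := by
  rw [show v i + v j = v i - v j + (2 : ℂ) • v j by module]
  exact AddSubgroup.add_mem _ (hv.sub_mem i j) (hv.two_smul_mem j)

lemma comp {κ : Type*} [DecidableEq κ] (hv : IsFrameFamily v) {f : κ → ι}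
    (hf : Function.Injective f) : IsFrameFamily (v ∘ f) where
  orthonormal i j := (hv.orthonormal _ _).trans (by simp only [hf.eq_iff])
  sub_mem _ _ := hv.sub_mem _ _
  two_smul_mem _ := hv.two_smul_mem _

lemma map {w : V8 ≃ₗ[ℂ] V8} (hv : IsFrameFamily v) (hw : w ∈ WE7) : IsFrameFamily (w ∘ v) where
  orthonormal i j := (dotProduct_map_of_mem_WE7 hw _ _).trans (hv.orthonormal i j)
  sub_mem i j := by
    simpa only [Function.comp_apply, ← map_sub, map_mem_e8Lattice_iff_of_mem_WE7 hw]
      using hv.sub_mem i j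
  two_smul_mem i := by
    simpa only [Function.comp_apply, ← map_smul, map_mem_e8Lattice_iff_of_mem_WE7 hw]
      using hv.two_smul_mem i

end IsFrameFamily

lemma isClFrame_iff {l : ℕ} {A : Set V8} :
    IsClFrame l A ↔ ∃ a : Fin l → V8, IsFrameFamily a ∧ A = frameOf a Finset.univ := by
  simp only [IsClFrame, range_union_range_neg]
  constructor
  · rintro ⟨a, rfl, horth, hmem, htwo⟩
    refine ⟨a, ⟨horth, fun i j => ?_, htwo⟩, rfl⟩
    rcases lt_trichotomy i j with hij | rfl | hij
    · exact (hmem i j hij).2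
    · rw [sub_self]
      exact zero_mem e8Lattice
    · rw [← neg_sub]
      exact neg_mem (S := AddSubgroup V8) (hmem j i hij).2
  · rintro ⟨a, ha, rfl⟩
    exact ⟨a, rfl, ha.orthonormal, fun i j _ => ⟨ha.add_mem i j, ha.sub_mem i j⟩,
      ha.two_smul_mem⟩

lemma IsFrameFamily.isClFrame_frameOf (hv : IsFrameFamily v) (S : Finset ι) :
    IsClFrame S.card (frameOf v S) := by
  refine isClFrame_iff.2 ⟨v ∘ (↑) ∘ S.equivFin.symm,
    hv.comp (Subtype.val_injective.comp S.equivFin.symm.injective), ?_⟩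
  ext x
  constructor
  · rintro ⟨j, hj, h⟩
    exact ⟨S.equivFin ⟨j, hj⟩, Finset.mem_univ _, by simpa using h⟩
  · rintro ⟨i, -, h⟩
    exact ⟨_, (S.equivFin.symm i).2, h⟩

end FrameOf

namespace IsClFrame

variable {l : ℕ} {A : Set V8}

lemma image (hA : IsClFrame l A) {w : V8 ≃ₗ[ℂ] V8} (hw : w ∈ WE7) : IsClFrame l (w '' A) := by
  obtain ⟨a, ha, rfl⟩ := isClFrame_iff.1 hA
  exact isClFrame_iff.2 ⟨w ∘ a, ha.map hw, image_frameOf w a _⟩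

lemma ncard_eq (hA : IsClFrame l A) : A.ncard = 2 * l := by
  obtain ⟨a, ha, rfl⟩ := isClFrame_iff.1 hA
  rw [ha.orthonormal.ncard_frameOf, Finset.card_univ, Fintype.card_fin]

lemma neg_mem (hA : IsClFrame l A) {a : V8} (ha : a ∈ A) : -a ∈ A := by
  obtain ⟨v, -, rfl⟩ := isClFrame_iff.1 hA
  exact neg_mem_frameOf ha

lemma isFrameVector (hA : IsClFrame l A) {a : V8} (ha : a ∈ A) : IsFrameVector a := by
  obtain ⟨v, hv, rfl⟩ := isClFrame_iff.1 hA
  have hvi (i : Fin l) : IsFrameVector (v i) :=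
    ⟨(hv.orthonormal i i).trans (if_pos rfl), hv.two_smul_mem i⟩
  obtain ⟨i, -, rfl | rfl⟩ := ha
  exacts [hvi i, isFrameVector_neg_iff.2 (hvi i)]

lemma sub_mem (hA : IsClFrame l A) {a b : V8} (ha : a ∈ A) (hb : b ∈ A) :
    a - b ∈ e8Lattice := by
  obtain ⟨v, hv, rfl⟩ := isClFrame_iff.1 hA
  obtain ⟨i, -, rfl | rfl⟩ := ha <;> obtain ⟨j, -, rfl | rfl⟩ := hb
  · exact hv.sub_mem i j
  · exact sub_neg_eq_add (v i) (v j) ▸ hv.add_mem i j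
  · exact neg_add' (v i) (v j) ▸ AddSubgroup.neg_mem _ (hv.add_mem i j)
  · exact neg_sub_neg (v i) (v j) ▸ hv.sub_mem j i

end IsClFrame

/-! ### Full frames -/

lemma exists_of_sum_sq_eq_one {ι : Type*} [Fintype ι] {n : ι → ℤ} (hn : ∑ i, n i ^ 2 = 1) :
    ∃ k, (n k = 1 ∨ n k = -1) ∧ ∀ j ≠ k, n j = 0 := by
  classical
  obtain ⟨k, -, hk⟩ := Finset.exists_ne_zero_of_sum_ne_zero (hn ▸ one_ne_zero)
  rw [← Finset.add_sum_erase _ _ (Finset.mem_univ k)] at hn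
  have hrest : 0 ≤ ∑ i ∈ Finset.univ.erase k, n i ^ 2 := Finset.sum_nonneg fun i _ => sq_nonneg _
  have hpos : 0 < n k ^ 2 := (sq_nonneg _).lt_of_ne' hk
  refine ⟨k, sq_eq_one_iff.1 (by lia), fun j hj => ?_⟩
  have hzero := (Finset.sum_eq_zero_iff_of_nonneg fun i _ => sq_nonneg (n i)).1
    (show ∑ i ∈ Finset.univ.erase k, n i ^ 2 = 0 by lia)
  exact pow_eq_zero_iff two_ne_zero |>.1 (hzero j (by simp [hj]))

namespace IsFrameFamily

variable {v : Fin 8 → V8}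

lemma sum_dotProduct_smul (hv : IsFrameFamily v) (b : V8) : ∑ k, (b ⬝ᵥ v k) • v k = b := by
  have hM : Matrix.of v * (Matrix.of v).transpose = 1 := by
    ext i j
    exact (hv.orthonormal i j).trans Matrix.one_apply.symm
  have := Matrix.vecMul_vecMul b (Matrix.of v).transpose (Matrix.of v)
  rw [mul_eq_one_comm.1 hM, Matrix.vecMul_one, Matrix.vecMul_eq_sum] at this
  exact this

lemma sum_dotProduct_sq (hv : IsFrameFamily v) (b : V8) : ∑ k, (b ⬝ᵥ v k) ^ 2 = b ⬝ᵥ b := by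
  conv_rhs => lhs; rw [← hv.sum_dotProduct_smul b]
  rw [sum_dotProduct]
  exact Finset.sum_congr rfl fun k _ => by
    rw [smul_dotProduct, smul_eq_mul, dotProduct_comm (v k), sq]

/-- Modulo the lattice, a frame vector determines the `C₈`-frame containing it: its coordinates
with respect to that frame are integers whose squares sum to `1`. -/
lemma eq_or_eq_neg_of_sub_mem (hv : IsFrameFamily v) {b : V8} (hb : IsFrameVector b) {j : Fin 8}
    (hbj : b - v j ∈ e8Lattice) : ∃ k, b = v k ∨ b = -v k := by
  have hcoord (k : Fin 8) : ∃ n : ℤ, b ⬝ᵥ v k = n := by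
    have hbk := AddSubgroup.add_mem _ hbj (hv.sub_mem j k)
    rw [sub_add_sub_cancel] at hbk
    obtain ⟨n, hn⟩ := exists_dotProduct_self_eq hbk
    have hvk : v k ⬝ᵥ v k = 1 := (hv.orthonormal k k).trans (if_pos rfl)
    rw [sub_dotProduct, dotProduct_sub, dotProduct_sub, hb.1, hvk, dotProduct_comm (v k)] at hn
    exact ⟨1 - n, by push_cast; linear_combination -hn / 2⟩
  choose n hn using hcoord
  have hsum : ∑ k, n k ^ 2 = 1 := by
    have := hv.sum_dotProduct_sq b
    simp only [hn, hb.1] at this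
    exact_mod_cast this
  obtain ⟨k, hk, hzero⟩ := exists_of_sum_sq_eq_one hsum
  have hexp : b = (n k : ℂ) • v k := by
    conv_lhs => rw [← hv.sum_dotProduct_smul b]
    simp only [hn]
    exact Fintype.sum_eq_single k fun j hj => by rw [hzero j hj, Int.cast_zero, zero_smul]
  refine ⟨k, hk.imp (fun h => ?_) fun h => ?_⟩ <;> simpa [h] using hexp

lemma exists_eq_frameOf (hv : IsFrameFamily v) {l : ℕ} {A : Set V8} (hA : IsClFrame l A)
    {j : Fin 8} (hj : v j ∈ A) : ∃ S : Finset (Fin 8), S.card = l ∧ A = frameOf v S := by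
  classical
  have hAS : A = frameOf v (Finset.univ.filter fun k => v k ∈ A) := by
    ext b
    constructor
    · intro hb
      obtain ⟨k, rfl | rfl⟩ := hv.eq_or_eq_neg_of_sub_mem (hA.isFrameVector hb) (hA.sub_mem hb hj)
      · exact ⟨k, by simpa using hb, .inl rfl⟩
      · exact ⟨k, by simpa using hA.neg_mem hb, .inr rfl⟩
    · rintro ⟨k, hk, rfl | rfl⟩ <;> rw [Finset.mem_filter] at hk
      exacts [hk.2, hA.neg_mem hk.2]
  refine ⟨_, ?_, hAS⟩
  have := hA.ncard_eq
  rw [hAS, hv.orthonormal.ncard_frameOf] at this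
  lia

end IsFrameFamily

/-! ### Permuting a full frame -/

lemma exists_perm_map_eq_of_multiset_map_eq {α β : Type*} [Finite α] {f : α → β}
    {S T : Finset α} (h : S.val.map f = T.val.map f) :
    ∃ σ : Equiv.Perm α, (∀ x, f (σ x) = f x) ∧ S.map σ.toEmbedding = T := by
  classical
  cases nonempty_fintype α
  have hcard (c : β) : (S.filter (f · = c)).card = (T.filter (f · = c)).card := by
    simpa only [Multiset.count_map, ← Finset.filter_val, Finset.card_val, eq_comm (a := c)]
      using congrArg (Multiset.count c) h
  have hcompl (c : β) : (Sᶜ.filter (f · = c)).card = (Tᶜ.filter (f · = c)).card := by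
    have split (U : Finset α) : (U.filter (f · = c)).card + (Uᶜ.filter (f · = c)).card =
        (Finset.univ.filter (f · = c)).card := by
      rw [← Finset.card_union_of_disjoint (Finset.disjoint_filter_filter disjoint_compl_right),
        ← Finset.filter_union, Finset.union_compl]
    have := hcard c
    have := split S
    have := split T
    lia
  have hfiber (c : β × Prop) :
      Nonempty ({x // (f x, x ∈ S) = c} ≃ {x // (f x, x ∈ T) = c}) := by
    obtain ⟨c, p⟩ := c
    refine Fintype.card_eq.1 ?_
    rw [Fintype.card_subtype, Fintype.card_subtype]
    have filter_eq (U : Finset α) : Finset.univ.filter (fun x => (f x, x ∈ U) = (c, p)) =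
        if p then U.filter (f · = c) else Uᶜ.filter (f · = c) := by
      split_ifs with hp <;> ext x <;> simp [hp, and_comm]
    rw [filter_eq, filter_eq]
    split_ifs
    exacts [hcard c, hcompl c]
  let e (c : β × Prop) := (hfiber c).some
  have hσ (x : α) : (f (Equiv.ofFiberEquiv e x), Equiv.ofFiberEquiv e x ∈ T) = (f x, x ∈ S) :=
    Equiv.ofFiberEquiv_map e x
  simp only [Prod.mk.injEq] at hσ
  refine ⟨Equiv.ofFiberEquiv e, fun x => (hσ x).1, ?_⟩
  ext x
  rw [Finset.mem_map_equiv, ← (hσ _).2, Equiv.apply_symm_apply]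

lemma mem_closure_swap_of_apply_eq {α β : Type*} [Finite α] [DecidableEq α] {f : α → β}
    {σ : Equiv.Perm α} (hσ : ∀ x, f (σ x) = f x) :
    σ ∈ Subgroup.closure {τ | ∃ x y, x ≠ y ∧ f x = f y ∧ τ = Equiv.swap x y} := by
  refine (mem_closure_isSwap ?_).2 ⟨Set.toFinite _, fun x => ?_⟩
  · rintro _ ⟨x, y, hxy, -, rfl⟩
    exact ⟨x, y, hxy, rfl⟩
  · by_cases hx : σ x = x
    · rw [hx]
      exact MulAction.mem_orbit_self x
    · exact ⟨⟨Equiv.swap x (σ x), Subgroup.subset_closure ⟨x, σ x, Ne.symm hx, (hσ x).symm, rfl⟩⟩,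
        Equiv.swap_apply_left x (σ x)⟩

namespace IsFrameFamily

variable {ι : Type*} [DecidableEq ι] {v : ι → V8}

lemma exists_mem_WE7_swap (hv : IsFrameFamily v) {i j : ι} (hij : i ≠ j)
    (hphi : phi8 ⬝ᵥ v i = phi8 ⬝ᵥ v j) : ∃ w ∈ WE7, ∀ k, w (v k) = v (Equiv.swap i j k) := by
  have hdot (k : ι) : (v i - v j) ⬝ᵥ v k = (if i = k then 1 else 0) - if j = k then 1 else 0 := by
    rw [sub_dotProduct, hv.orthonormal, hv.orthonormal]
  have hnorm : (v i - v j) ⬝ᵥ (v i - v j) = 2 := by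
    rw [dotProduct_sub, hdot, hdot]
    norm_num [hij, hij.symm]
  refine ⟨rootReflection _ hnorm, rootReflection_mem_WE7 hnorm (hv.sub_mem i j)
    (by rw [dotProduct_sub, hphi, sub_self]), fun k => ?_⟩
  rw [rootReflection_apply, hdot, Equiv.swap_apply_def]
  rcases eq_or_ne k i with rfl | hik
  · simp [hij.symm]
  rcases eq_or_ne k j with rfl | hjk
  · simp [hij, hij.symm]
  simp [hik, hik.symm, hjk, hjk.symm]

lemma exists_mem_WE7_perm [Finite ι] (hv : IsFrameFamily v) {σ : Equiv.Perm ι}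
    (hσ : ∀ j, phi8 ⬝ᵥ v (σ j) = phi8 ⬝ᵥ v j) : ∃ w ∈ WE7, ∀ j, w (v j) = v (σ j) := by
  have hmem := mem_closure_swap_of_apply_eq (f := fun j => phi8 ⬝ᵥ v j) hσ
  clear hσ
  induction hmem using Subgroup.closure_induction with
  | mem _ h =>
    obtain ⟨i, j, hij, hphi, rfl⟩ := h
    exact hv.exists_mem_WE7_swap hij hphi
  | one => exact ⟨1, one_mem _, fun _ => rfl⟩
  | mul σ τ _ _ hσ hτ =>
    obtain ⟨w, hw, hwσ⟩ := hσ
    obtain ⟨w', hw', hwτ⟩ := hτ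
    exact ⟨w * w', mul_mem hw hw', fun j => (congrArg w (hwτ j)).trans (hwσ _)⟩
  | inv σ _ hσ =>
    obtain ⟨w, hw, hwσ⟩ := hσ
    refine ⟨w⁻¹, inv_mem hw, fun j => (w.symm_apply_eq).2 ?_⟩
    exact (congrArg v (σ.apply_symm_apply j)).symm.trans (hwσ _).symm

lemma exists_mem_WE7_image_frameOf [Finite ι] (hv : IsFrameFamily v) {S T : Finset ι}
    (h : S.val.map (phi8 ⬝ᵥ v ·) = T.val.map (phi8 ⬝ᵥ v ·)) :
    ∃ w ∈ WE7, w '' frameOf v S = frameOf v T := by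
  obtain ⟨σ, hσ, rfl⟩ := exists_perm_map_eq_of_multiset_map_eq h
  obtain ⟨w, hw, hwσ⟩ := hv.exists_mem_WE7_perm hσ
  exact ⟨w, hw, by rw [image_frameOf, frameOf_map_equiv, show w ∘ v = v ∘ σ from funext hwσ]⟩

end IsFrameFamily

/-! ### The standard full frames -/

/-- The vector `y / 4`. Frame vectors are studied through the integral vectors `y = 4a`. -/
def quarter : (Fin 8 → ℤ) →+ V8 := (1 / 2 : ℂ) • half

/-- `y` is four times a frame vector. -/
abbrev IsQuadrupledFrameVector (y : Fin 8 → ℤ) : Prop := IsDoubledE8 y ∧ y ⬝ᵥ y = 16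

lemma quarter_eq_smul_half (y : Fin 8 → ℤ) : quarter y = (1 / 2 : ℂ) • half y := rfl

lemma two_smul_quarter (y : Fin 8 → ℤ) : (2 : ℂ) • quarter y = half y := by
  rw [quarter_eq_smul_half, smul_smul]
  norm_num

lemma quarter_two_smul (z : Fin 8 → ℤ) : quarter (2 • z) = half z := by
  rw [map_nsmul, ← two_smul_quarter, two_smul, two_smul]

lemma quarter_injective : Function.Injective quarter := fun y z h =>
  half_injective (smul_right_injective V8 (by norm_num : (1 / 2 : ℂ) ≠ 0) h)

lemma quarter_dotProduct_quarter (y z : Fin 8 → ℤ) :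
    quarter y ⬝ᵥ quarter z = ((y ⬝ᵥ z : ℤ) : ℂ) / 16 := by
  simp only [quarter_eq_smul_half, smul_dotProduct, dotProduct_smul, half_dotProduct_half,
    smul_eq_mul]
  ring

lemma half_dotProduct_quarter (z y : Fin 8 → ℤ) :
    half z ⬝ᵥ quarter y = ((z ⬝ᵥ y : ℤ) : ℂ) / 8 := by
  simp only [quarter_eq_smul_half, dotProduct_smul, half_dotProduct_half, smul_eq_mul]
  ring

lemma phi8_dotProduct_quarter (y : Fin 8 → ℤ) :
    phi8 ⬝ᵥ quarter y = ((∑ i, y i : ℤ) : ℂ) / 8 := by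
  rw [phi8_eq_half_one, half_dotProduct_quarter, one_dotProduct]

lemma isFrameVector_quarter_iff {y : Fin 8 → ℤ} :
    IsFrameVector (quarter y) ↔ IsQuadrupledFrameVector y := by
  rw [IsFrameVector, two_smul_quarter, mem_e8Lattice, half_mem_E8lat_iff,
    quarter_dotProduct_quarter, and_comm, div_eq_iff (by norm_num), one_mul]
  norm_cast

lemma IsFrameVector.exists_eq_quarter {a : V8} (ha : IsFrameVector a) :
    ∃ y, IsQuadrupledFrameVector y ∧ a = quarter y := by
  obtain ⟨y, -, hy⟩ := exists_half_of_mem_E8lat ha.2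
  obtain rfl : a = quarter y := by
    rw [quarter_eq_smul_half, ← hy, smul_smul]
    norm_num
  exact ⟨y, isFrameVector_quarter_iff.1 ha, rfl⟩

/-- `z` is the double of a root of `E₇`. -/
abbrev IsDoubledE7Root (z : Fin 8 → ℤ) : Prop := IsDoubledE8 z ∧ z ⬝ᵥ z = 8 ∧ ∑ i, z i = 0

lemma exists_mem_WE7_quarter_sub {y z : Fin 8 → ℤ} {k : ℤ} (hz : IsDoubledE7Root z)
    (hk : z ⬝ᵥ y = 4 * k) : ∃ r ∈ WE7, r (quarter y) = quarter (y - k • z) := by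
  obtain ⟨hmem, hnorm, hsum⟩ := hz
  have hα : half z ⬝ᵥ half z = 2 := by
    rw [half_dotProduct_half, hnorm]
    norm_num
  have hphi : phi8 ⬝ᵥ half z = 0 := by
    rw [phi8_dotProduct_half, hsum, Int.cast_zero, zero_div]
  have hdot : half z ⬝ᵥ quarter y = k / 2 := by
    rw [half_dotProduct_quarter, hk]
    push_cast
    ring
  refine ⟨_, rootReflection_mem_WE7 hα (half_mem_E8lat hmem) hphi, ?_⟩
  rw [rootReflection_apply, hdot, map_sub, map_zsmul, ← two_smul_quarter, smul_smul,
    div_mul_cancel₀ _ two_ne_zero, Int.cast_smul_eq_zsmul]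

lemma IsQuadrupledFrameVector.map {y z : Fin 8 → ℤ} (hy : IsQuadrupledFrameVector y)
    {w : V8 ≃ₗ[ℂ] V8} (hw : w ∈ WE7) (hyz : w (quarter y) = quarter z) :
    IsQuadrupledFrameVector z := by
  rwa [← isFrameVector_quarter_iff, ← hyz, isFrameVector_map_iff hw, isFrameVector_quarter_iff]

/-- The two `W(E₇)`-classes of `C₈`-frames, told apart by whether `φ` takes half-integral or
integral values on them. -/
inductive FrameKind
  | I
  | II
  deriving DecidableEq

/-- Four times the standard `C₈`-frame of each kind: the coordinate frame, and its reflection in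
the root `ε / 2`, where `ε = (1, 1, -1, …, -1)`. -/
def quadrupledStdFrame : FrameKind → Fin 8 → Fin 8 → ℤ
  | .I, j => Pi.single j 4
  | .II, j => Pi.single j 4 - fun i => if (j < 2 ↔ i < 2) then 1 else -1

/-- The standard `C₈`-frame of each kind. -/
def stdFrame (κ : FrameKind) (j : Fin 8) : V8 := quarter (quadrupledStdFrame κ j)

lemma isFrameFamily_stdFrame (κ : FrameKind) : IsFrameFamily (stdFrame κ) where
  orthonormal i j := by
    have hdot : quadrupledStdFrame κ i ⬝ᵥ quadrupledStdFrame κ j = if i = j then 16 else 0 := by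
      cases κ <;> revert i j <;> decide +kernel
    rw [stdFrame, stdFrame, quarter_dotProduct_quarter, hdot]
    split_ifs <;> norm_num
  sub_mem i j := by
    obtain ⟨z, hz, hsub⟩ : ∃ z, IsDoubledE8 z ∧
        quadrupledStdFrame κ i - quadrupledStdFrame κ j = 2 • z := by
      refine ⟨(quadrupledStdFrame κ i - quadrupledStdFrame κ j) / 2, ?_⟩
      cases κ <;> revert i j <;> decide +kernel
    rw [stdFrame, stdFrame, ← map_sub, hsub, quarter_two_smul]
    exact half_mem_E8lat hz
  two_smul_mem i := by
    have hmem : IsDoubledE8 (quadrupledStdFrame κ i) := by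
      cases κ <;> revert i <;> decide +kernel
    rw [stdFrame, two_smul_quarter]
    exact half_mem_E8lat hmem

/-- Twice the value of `φ` on each vector of `stdFrame`. -/
def doubledStdFrameValue : FrameKind → Fin 8 → ℤ
  | .I, _ => 1
  | .II, j => if j < 2 then 2 else 0

lemma phi8_dotProduct_stdFrame (κ : FrameKind) (j : Fin 8) :
    phi8 ⬝ᵥ stdFrame κ j = doubledStdFrameValue κ j / 2 := by
  have hsum : ∑ i, quadrupledStdFrame κ j i = 4 * doubledStdFrameValue κ j := by
    cases κ <;> revert j <;> decide +kernel
  rw [stdFrame, phi8_dotProduct_quarter, hsum]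
  push_cast
  ring

/-! ### Dominant frame vectors -/

/-- Twice the simple roots of `E₇`; in Bourbaki's numbering they are
`α₁, α₃, α₄, α₅, α₆, α₇, α₂`. -/
def doubledSimpleRoot : Fin 7 → Fin 8 → ℤ :=
  ![![0, 2, -2, 0, 0, 0, 0, 0], ![0, 0, 2, -2, 0, 0, 0, 0], ![0, 0, 0, 2, -2, 0, 0, 0],
    ![0, 0, 0, 0, 2, -2, 0, 0], ![0, 0, 0, 0, 0, 2, -2, 0], ![0, 0, 0, 0, 0, 0, 2, -2],
    ![-1, -1, -1, -1, 1, 1, 1, 1]]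

/-- Twice the inverse of the Cartan matrix of `E₇`, in the order of `doubledSimpleRoot`. -/
def doubledInverseCartan : Matrix (Fin 7) (Fin 7) ℤ :=
  !![4, 6, 8, 6, 4, 2, 4;
     6, 12, 16, 12, 8, 4, 8;
     8, 16, 24, 18, 12, 6, 12;
     6, 12, 18, 15, 10, 5, 9;
     4, 8, 12, 10, 8, 4, 6;
     2, 4, 6, 5, 4, 3, 3;
     4, 8, 12, 9, 6, 3, 7]

/-- An integral vector whose inner product with every simple root is positive. -/
def dominantWeight : Fin 8 → ℤ := ![-9, 7, 6, 5, 4, 3, 2, 1]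

lemma two_mul_dotProduct_le {n : Type*} [Fintype n] (x y : n → ℤ) :
    2 * (x ⬝ᵥ y) ≤ x ⬝ᵥ x + y ⬝ᵥ y := by
  simp only [dotProduct, Finset.mul_sum, ← Finset.sum_add_distrib]
  exact Finset.sum_le_sum fun i _ => by linarith [two_mul_le_add_sq (x i) (y i)]

lemma isDoubledE7Root_doubledSimpleRoot (s : Fin 7) : IsDoubledE7Root (doubledSimpleRoot s) := by
  revert s
  decide

lemma dominantWeight_dotProduct_doubledSimpleRoot_pos (s : Fin 7) :
    0 < dominantWeight ⬝ᵥ doubledSimpleRoot s := by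
  revert s
  decide

/-- A vector of the orbit of `a` on which `dominantWeight` is maximal is dominant. -/
lemma exists_mem_WE7_dominant {a : V8} (ha : IsFrameVector a) :
    ∃ w ∈ WE7, ∃ y, w a = quarter y ∧ IsQuadrupledFrameVector y ∧
      ∀ s, 0 ≤ doubledSimpleRoot s ⬝ᵥ y := by
  obtain ⟨_, ⟨w, hw, y, hwy, hy, rfl⟩, hmax⟩ := Int.exists_greatest_of_bdd
    (P := fun m => ∃ w ∈ WE7, ∃ y, w a = quarter y ∧ IsQuadrupledFrameVector y ∧
      dominantWeight ⬝ᵥ y = m)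
    (by
      refine ⟨dominantWeight ⬝ᵥ dominantWeight + 16, ?_⟩
      rintro _ ⟨-, -, y, -, hy, rfl⟩
      have hle := two_mul_dotProduct_le dominantWeight y
      have hpos : 0 ≤ dominantWeight ⬝ᵥ dominantWeight := by decide
      lia)
    (by
      obtain ⟨y, hy, rfl⟩ := ha.exists_eq_quarter
      exact ⟨_, 1, one_mem _, y, rfl, hy, rfl⟩)
  refine ⟨w, hw, y, hwy, hy, fun s => ?_⟩
  have hs := isDoubledE7Root_doubledSimpleRoot s
  obtain ⟨k, hk⟩ := hs.1.four_dvd_dotProduct hy.1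
  obtain ⟨r, hr, hry⟩ := exists_mem_WE7_quarter_sub hs hk
  have hle := hmax _ ⟨r * w, mul_mem hr hw, y - k • doubledSimpleRoot s,
    by rw [LinearEquiv.mul_apply, hwy, hry], hy.map hr hry, rfl⟩
  rw [dotProduct_sub, dotProduct_smul, smul_eq_mul, sub_le_self_iff] at hle
  have := nonneg_of_mul_nonneg_left hle (dominantWeight_dotProduct_doubledSimpleRoot_pos s)
  lia

lemma diag_mul_sq_le_dotProduct_mulVec {n : Type*} [Fintype n] {M : Matrix n n ℤ}
    (hM : ∀ i j, 0 ≤ M i j) {d : n → ℤ} (hd : ∀ i, 0 ≤ d i) (s : n) :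
    M s s * d s ^ 2 ≤ d ⬝ᵥ M.mulVec d := calc
  M s s * d s ^ 2 = d s * (M s s * d s) := by ring
  _ ≤ d s * M.mulVec d s := mul_le_mul_of_nonneg_left
    (Finset.single_le_sum (f := fun j => M s j * d j) (fun j _ => mul_nonneg (hM s j) (hd j))
      (Finset.mem_univ s)) (hd s)
  _ ≤ d ⬝ᵥ M.mulVec d := Finset.single_le_sum (f := fun i => d i * M.mulVec d i)
    (fun i _ => mul_nonneg (hd i) (Finset.sum_nonneg fun j _ => mul_nonneg (hM i j) (hd j)))
    (Finset.mem_univ s)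

lemma sq_sum_add_dotProduct_doubledInverseCartan (y : Fin 8 → ℤ) :
    (∑ i, y i) ^ 2 + (fun s => doubledSimpleRoot s ⬝ᵥ y) ⬝ᵥ
      doubledInverseCartan.mulVec (fun s => doubledSimpleRoot s ⬝ᵥ y) = 8 * (y ⬝ᵥ y) := by
  simp [doubledInverseCartan, doubledSimpleRoot, dotProduct, Matrix.mulVec, Fin.sum_univ_succ]
  ring

lemma eq_of_dotProduct_doubledSimpleRoot_eq {y z : Fin 8 → ℤ} (hsum : ∑ i, y i = ∑ i, z i)
    (hdot : ∀ s, doubledSimpleRoot s ⬝ᵥ y = doubledSimpleRoot s ⬝ᵥ z) : y = z := by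
  have hform := sq_sum_add_dotProduct_doubledInverseCartan (y - z)
  simp only [dotProduct_sub (doubledSimpleRoot _), hdot, sub_self,
    Pi.sub_apply, Finset.sum_sub_distrib, hsum,
    ← Pi.zero_def, Matrix.mulVec_zero, dotProduct_zero] at hform
  exact sub_eq_zero.1 (dotProduct_self_eq_zero.1 (by lia))

lemma doubledInverseCartan_nonneg (i j : Fin 7) : 0 ≤ doubledInverseCartan i j := by
  fin_cases i <;> revert j <;> decide

lemma three_le_doubledInverseCartan_self (i : Fin 7) : 3 ≤ doubledInverseCartan i i := by
  revert i
  decide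

lemma eq_of_sq_add_doubledInverseCartan_eq_eight {c : ℤ} {d : Fin 7 → ℤ} (hc : c ≤ 0)
    (hd : ∀ s, 0 ≤ d s) (h : c ^ 2 + d ⬝ᵥ doubledInverseCartan.mulVec d = 8) :
    (c = -1 ∧ d = Pi.single 6 1) ∨ (c = -2 ∧ d = Pi.single 0 1) ∨
      (c = 0 ∧ d = Pi.single 4 1) := by
  have hdiag (s : Fin 7) : 3 * d s ^ 2 ≤ 8 - c ^ 2 := calc
    3 * d s ^ 2 ≤ doubledInverseCartan s s * d s ^ 2 :=
      mul_le_mul_of_nonneg_right (three_le_doubledInverseCartan_self s) (sq_nonneg _)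
    _ ≤ d ⬝ᵥ doubledInverseCartan.mulVec d :=
      diag_mul_sq_le_dotProduct_mulVec doubledInverseCartan_nonneg hd s
    _ = 8 - c ^ 2 := by lia
  have hd_mem : d ∈ Fintype.piFinset fun _ => Finset.Icc (0 : ℤ) 1 := by
    simp only [Fintype.mem_piFinset, Finset.mem_Icc]
    exact fun s => ⟨hd s, by nlinarith [hdiag s, hd s]⟩
  have hc_mem : c ∈ Finset.Icc (-2 : ℤ) 0 :=
    Finset.mem_Icc.2 ⟨by nlinarith [hdiag 0, sq_nonneg (d 0)], hc⟩
  have hcheck : ∀ c ∈ Finset.Icc (-2 : ℤ) 0,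
      ∀ d ∈ Fintype.piFinset fun _ : Fin 7 => Finset.Icc (0 : ℤ) 1,
      c ^ 2 + d ⬝ᵥ doubledInverseCartan.mulVec d = 8 →
      (c = -1 ∧ d = Pi.single 6 1) ∨ (c = -2 ∧ d = Pi.single 0 1) ∨
        (c = 0 ∧ d = Pi.single 4 1) := by
    decide +kernel
  exact hcheck c hc_mem d hd_mem h

lemma eq_of_dominant {y : Fin 8 → ℤ} (hy : IsQuadrupledFrameVector y)
    (hdom : ∀ s, 0 ≤ doubledSimpleRoot s ⬝ᵥ y) (hsum : ∑ i, y i ≤ 0) :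
    y = ![-4, 0, 0, 0, 0, 0, 0, 0] ∨ y = ![-3, 1, -1, -1, -1, -1, -1, -1] ∨
      y = ![-3, 1, 1, 1, 1, 1, -1, -1] := by
  choose d hd using fun s => (isDoubledE7Root_doubledSimpleRoot s).1.four_dvd_dotProduct hy.1
  obtain ⟨⟨-, c, hc⟩, hnorm⟩ := hy
  have hform : c ^ 2 + d ⬝ᵥ doubledInverseCartan.mulVec d = 8 := by
    have h := sq_sum_add_dotProduct_doubledInverseCartan y
    simp only [hd, hc, hnorm] at h
    rw [show (fun s => 4 * d s) = (4 : ℤ) • d from rfl, Matrix.mulVec_smul, dotProduct_smul,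
      smul_dotProduct, smul_eq_mul, smul_eq_mul] at h
    lia
  have hd_nonneg (s : Fin 7) : 0 ≤ d s := by linarith [hdom s, hd s]
  obtain ⟨rfl, rfl⟩ | ⟨rfl, rfl⟩ | ⟨rfl, rfl⟩ :=
    eq_of_sq_add_doubledInverseCartan_eq_eight (by lia) hd_nonneg hform
  · left
    exact eq_of_dotProduct_doubledSimpleRoot_eq hc fun s => (hd s).trans (by revert s; decide)
  · right; left
    exact eq_of_dotProduct_doubledSimpleRoot_eq hc fun s => (hd s).trans (by revert s; decide)
  · right; right
    exact eq_of_dotProduct_doubledSimpleRoot_eq hc fun s => (hd s).trans (by revert s; decide)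

lemma exists_mem_WE7_stdFrame_of_sum_nonpos {y : Fin 8 → ℤ} (hy : IsQuadrupledFrameVector y)
    (hsum : ∑ i, y i ≤ 0) : ∃ w ∈ WE7, ∃ κ j, w (quarter y) = -stdFrame κ j := by
  obtain ⟨w, hw, z, hwz, hz, hdom⟩ := exists_mem_WE7_dominant (isFrameVector_quarter_iff.2 hy)
  have hsum_eq : ∑ i, z i = ∑ i, y i := by
    have h := phi8_dotProduct_map_of_mem_WE7 hw (quarter y)
    rw [hwz, phi8_dotProduct_quarter, phi8_dotProduct_quarter,
      div_left_inj' (by norm_num)] at h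
    exact_mod_cast h
  simp only [stdFrame, ← map_neg]
  rcases eq_of_dominant hz hdom (hsum_eq ▸ hsum) with rfl | rfl | rfl
  · exact ⟨w, hw, .I, 0, hwz.trans (congrArg quarter (by decide))⟩
  · exact ⟨w, hw, .II, 0, hwz.trans (congrArg quarter (by decide))⟩
  · obtain ⟨r, hr, hr_apply⟩ := exists_mem_WE7_quarter_sub (k := -1)
      (y := ![-3, 1, 1, 1, 1, 1, -1, -1]) (z := ![2, 0, 0, 0, 0, 0, -2, 0])
      (by decide) (by decide)
    obtain ⟨r', hr', hr'_apply⟩ := exists_mem_WE7_quarter_sub (k := 1)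
      (y := ![-1, 1, 1, 1, 1, 1, -3, -1]) (z := ![0, 2, 0, 0, 0, 0, 0, -2])
      (by decide) (by decide)
    refine ⟨r' * (r * w), mul_mem hr' (mul_mem hr hw), .II, 6, ?_⟩
    rw [LinearEquiv.mul_apply, LinearEquiv.mul_apply, hwz, hr_apply,
      show ![-3, 1, 1, 1, 1, 1, -1, -1] - (-1 : ℤ) • ![2, 0, 0, 0, 0, 0, -2, 0] =
        (![-1, 1, 1, 1, 1, 1, -3, -1] : Fin 8 → ℤ) by decide, hr'_apply]
    exact congrArg quarter (by decide)

lemma exists_mem_WE7_stdFrame {a : V8} (ha : IsFrameVector a) :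
    ∃ w ∈ WE7, ∃ κ j, w a = stdFrame κ j ∨ w a = -stdFrame κ j := by
  obtain ⟨y, hy, rfl⟩ := ha.exists_eq_quarter
  rcases le_total (∑ i, y i) 0 with hsum | hsum
  · obtain ⟨w, hw, κ, j, h⟩ := exists_mem_WE7_stdFrame_of_sum_nonpos hy hsum
    exact ⟨w, hw, κ, j, Or.inr h⟩
  · have hneg : IsQuadrupledFrameVector (-y) := by
      rwa [← isFrameVector_quarter_iff, map_neg, isFrameVector_neg_iff, isFrameVector_quarter_iff]
    obtain ⟨w, hw, κ, j, h⟩ := exists_mem_WE7_stdFrame_of_sum_nonpos hneg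
      (by simpa using hsum)
    exact ⟨w, hw, κ, j, Or.inl (by rwa [map_neg, map_neg, neg_inj] at h)⟩

lemma IsClFrame.exists_mem_WE7_image_eq {l : ℕ} [NeZero l] {A : Set V8} (hA : IsClFrame l A) :
    ∃ w ∈ WE7, ∃ κ S, S.card = l ∧ w '' A = frameOf (stdFrame κ) S := by
  obtain ⟨a, ha⟩ : A.Nonempty := Set.nonempty_of_ncard_ne_zero
    (hA.ncard_eq ▸ mul_ne_zero two_ne_zero (NeZero.ne l))
  obtain ⟨w, hw, κ, j, hwa⟩ := exists_mem_WE7_stdFrame (hA.isFrameVector ha)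
  have hwA := hA.image hw
  have hmem : stdFrame κ j ∈ w '' A := by
    rcases hwa with hwa | hwa
    · exact hwa ▸ Set.mem_image_of_mem w ha
    · exact neg_neg (stdFrame κ j) ▸ hwa ▸ hwA.neg_mem (Set.mem_image_of_mem w ha)
  exact ⟨w, hw, κ, (isFrameFamily_stdFrame κ).exists_eq_frameOf hwA hmem⟩

/-! ### The types of `C₃`-frames -/

/-- The four types of `C₃`-frames. -/
inductive C3Type
  | I
  | II0
  | II1
  | II2
  deriving DecidableEq

instance : Fintype C3Type := ⟨{.I, .II0, .II1, .II2}, fun t => by cases t <;> decide⟩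

/-- The frame `A` is of the given type. -/
def C3Type.Holds : C3Type → Set V8 → Prop
  | .I => C3TypeI
  | .II0 => C3TypeII0
  | .II1 => C3TypeII1
  | .II2 => C3TypeII2

/-- Twice the values of `φ` on `a₀, a₁, a₂`, up to sign, for a frame `{±a₀, ±a₁, ±a₂}` of the
given type. -/
def C3Type.doubledValues : C3Type → Multiset ℤ
  | .I => {1, 1, 1}
  | .II0 => {0, 0, 0}
  | .II1 => {2, 0, 0}
  | .II2 => {2, 2, 0}

/-- The kind of the `C₈`-frame that contains a frame of the given type. -/
def C3Type.kind : C3Type → FrameKind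
  | .I => .I
  | .II0 | .II1 | .II2 => .II

lemma ncard_sep_frameOf_stdFrame (κ : FrameKind) (S : Finset (Fin 8)) {c : ℂ} {m : ℤ}
    (hc : c = m / 2) : {a ∈ frameOf (stdFrame κ) S | ip phi8 a = c}.ncard =
      (S.filter fun j => doubledStdFrameValue κ j = m).card +
        (S.filter fun j => doubledStdFrameValue κ j = -m).card := by
  classical
  rw [(isFrameFamily_stdFrame κ).orthonormal.ncard_frameOf_sep]
  simp only [ip_eq_dotProduct, dotProduct_neg, phi8_dotProduct_stdFrame, hc, neg_eq_iff_eq_neg,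
    ← neg_div, div_left_inj' (two_ne_zero' ℂ)]
  norm_cast

lemma c3TypeI_frameOf_stdFrame_iff (κ : FrameKind) (S : Finset (Fin 8)) :
    C3TypeI (frameOf (stdFrame κ) S) ↔
      ∀ j ∈ S, doubledStdFrameValue κ j = 1 ∨ doubledStdFrameValue κ j = -1 := by
  have hvalue (j : Fin 8) : (ip phi8 (stdFrame κ j) = 1 / 2 ↔ doubledStdFrameValue κ j = 1) ∧
      (ip phi8 (stdFrame κ j) = -(1 / 2) ↔ doubledStdFrameValue κ j = -1) := by
    rw [ip_eq_dotProduct, phi8_dotProduct_stdFrame, ← neg_div, div_left_inj' two_ne_zero,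
      div_left_inj' two_ne_zero]
    norm_cast
  simp only [C3TypeI, forall_mem_frameOf, ← hvalue, ip_eq_dotProduct, dotProduct_neg,
    neg_eq_iff_eq_neg, neg_neg]
  exact forall₂_congr fun j _ => and_iff_left_of_imp Or.symm

lemma c3TypeII0_frameOf_stdFrame_iff (κ : FrameKind) (S : Finset (Fin 8)) :
    C3TypeII0 (frameOf (stdFrame κ) S) ↔ ∀ j ∈ S, doubledStdFrameValue κ j = 0 := by
  simp [C3TypeII0, forall_mem_frameOf, ip_eq_dotProduct, phi8_dotProduct_stdFrame]

lemma C3Type.holds_frameOf_stdFrame_iff (t : C3Type) (κ : FrameKind) {S : Finset (Fin 8)}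
    (hS : S.card = 3) : t.Holds (frameOf (stdFrame κ) S) ↔
      S.val.map (doubledStdFrameValue κ) = t.doubledValues := by
  have ncard_one := ncard_sep_frameOf_stdFrame κ S (c := 1) (m := 2) (by norm_num)
  have ncard_neg_one := ncard_sep_frameOf_stdFrame κ S (c := -1) (m := -2) (by norm_num)
  have ncard_zero := ncard_sep_frameOf_stdFrame κ S (c := 0) (m := 0) (by norm_num)
  cases t <;>
    simp only [Holds, C3TypeII1, C3TypeII2, ncard_one, ncard_neg_one, ncard_zero,
      c3TypeI_frameOf_stdFrame_iff, c3TypeII0_frameOf_stdFrame_iff] <;>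
    clear ncard_one ncard_neg_one ncard_zero <;> revert S <;> cases κ <;> decide +kernel

lemma C3Type.kind_eq_of_map_eq {t : C3Type} {κ : FrameKind} {S : Finset (Fin 8)}
    (hS : S.card = 3) (h : S.val.map (doubledStdFrameValue κ) = t.doubledValues) :
    t.kind = κ := by
  cases t <;> cases κ <;> revert S <;> decide +kernel

lemma C3Type.existsUnique_map_eq_doubledValues (κ : FrameKind) {S : Finset (Fin 8)}
    (hS : S.card = 3) : ∃! t : C3Type, S.val.map (doubledStdFrameValue κ) = t.doubledValues := by
  unfold ExistsUnique
  cases κ <;> revert S <;> decide +kernel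

lemma ncard_sep_ip_image {w : V8 ≃ₗ[ℂ] V8} (hw : w ∈ WE7) (A : Set V8) (c : ℂ) :
    {b ∈ w '' A | ip phi8 b = c}.ncard = {a ∈ A | ip phi8 a = c}.ncard := by
  rw [← Set.ncard_image_of_injective {a ∈ A | ip phi8 a = c} w.injective]
  congr 1
  ext b
  constructor
  · rintro ⟨⟨a, ha, rfl⟩, hc⟩
    exact ⟨a, ⟨ha, (phi8_dotProduct_map_of_mem_WE7 hw a).symm.trans hc⟩, rfl⟩
  · rintro ⟨a, ⟨ha, hc⟩, rfl⟩
    exact ⟨⟨a, ha, rfl⟩, (phi8_dotProduct_map_of_mem_WE7 hw a).trans hc⟩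

namespace C3Type

lemma holds_image_iff (t : C3Type) {w : V8 ≃ₗ[ℂ] V8} (hw : w ∈ WE7) (A : Set V8) :
    t.Holds (w '' A) ↔ t.Holds A := by
  have hphi (a : V8) : ip phi8 (w a) = ip phi8 a := phi8_dotProduct_map_of_mem_WE7 hw a
  cases t
  · simp only [Holds, C3TypeI, Set.forall_mem_image, hphi]
  · simp only [Holds, C3TypeII0, Set.forall_mem_image, hphi]
  · simp only [Holds, C3TypeII1, ncard_sep_ip_image hw]
  · simp only [Holds, C3TypeII2, ncard_sep_ip_image hw]

lemma existsUnique_holds {A : Set V8} (hA : IsClFrame 3 A) : ∃! t : C3Type, t.Holds A := by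
  obtain ⟨w, hw, κ, S, hS, hwA⟩ := hA.exists_mem_WE7_image_eq
  have holds_iff (t : C3Type) :
      t.Holds A ↔ S.val.map (doubledStdFrameValue κ) = t.doubledValues := by
    rw [← holds_image_iff t hw, hwA, holds_frameOf_stdFrame_iff t κ hS]
  simpa only [holds_iff] using existsUnique_map_eq_doubledValues κ hS

lemma exists_mem_WE7_image_eq_of_holds {t : C3Type} {A B : Set V8} (hA : IsClFrame 3 A)
    (hB : IsClFrame 3 B) (htA : t.Holds A) (htB : t.Holds B) : ∃ w ∈ WE7, w '' A = B := by
  obtain ⟨u, hu, κ, S, hS, huA⟩ := hA.exists_mem_WE7_image_eq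
  obtain ⟨w, hw, κ', T, hT, hwB⟩ := hB.exists_mem_WE7_image_eq
  rw [← holds_image_iff t hu, huA, holds_frameOf_stdFrame_iff t κ hS] at htA
  rw [← holds_image_iff t hw, hwB, holds_frameOf_stdFrame_iff t κ' hT] at htB
  obtain rfl := kind_eq_of_map_eq hS htA
  obtain rfl := kind_eq_of_map_eq hT htB
  obtain ⟨v, hv, hvS⟩ := (isFrameFamily_stdFrame t.kind).exists_mem_WE7_image_frameOf (S := S)
    (T := T) (by
      simpa only [Multiset.map_map, Function.comp_def, phi8_dotProduct_stdFrame] using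
        congrArg (Multiset.map fun m : ℤ => (m / 2 : ℂ)) (htA.trans htB.symm))
  refine ⟨w⁻¹ * (v * u), mul_mem (inv_mem hw) (mul_mem hv hu), ?_⟩
  have image_mul (f g : V8 ≃ₗ[ℂ] V8) : (f * g) '' A = f '' (g '' A) := Set.image_comp f g A
  rw [image_mul, image_mul, huA, hvS, ← hwB, Set.image_image]
  exact (Set.image_congr fun b _ => w.symm_apply_apply b).trans (Set.image_id B)

end C3Type

/-! ### Counting frame vectors -/

/-- The number of integral `n`-tuples with entries in `C`, norm `N` and sum `m`, by recursion on `n`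
so that the kernel can evaluate it; see `card_tuples`. -/
def tupleCount (C : Finset ℤ) : ℕ → ℤ → ℤ → ℕ
  | 0, N, m => if N = 0 ∧ m = 0 then 1 else 0
  | n + 1, N, m => ∑ c ∈ C, if c ^ 2 ≤ N then tupleCount C n (N - c ^ 2) (m - c) else 0

/-- The integral `n`-tuples with entries in `C`, norm `N` and sum `m`. -/
def tuples (C : Finset ℤ) (n : ℕ) (N m : ℤ) : Finset (Fin n → ℤ) :=
  {y ∈ Fintype.piFinset fun _ => C | y ⬝ᵥ y = N ∧ ∑ i, y i = m}

lemma mem_tuples {C : Finset ℤ} {n : ℕ} {N m : ℤ} {y : Fin n → ℤ} :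
    y ∈ tuples C n N m ↔ (∀ i, y i ∈ C) ∧ y ⬝ᵥ y = N ∧ ∑ i, y i = m := by
  rw [tuples, Finset.mem_filter, Fintype.mem_piFinset]

lemma cons_mem_tuples {C : Finset ℤ} {n : ℕ} {N m c : ℤ} (hc : c ∈ C) {y : Fin n → ℤ} :
    Fin.cons c y ∈ tuples C (n + 1) N m ↔ y ∈ tuples C n (N - c ^ 2) (m - c) := by
  simp only [mem_tuples, Fin.forall_fin_succ, dotProduct, Fin.sum_univ_succ, Fin.cons_zero,
    Fin.cons_succ, hc, true_and, ← sq, eq_sub_iff_add_eq']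

lemma card_tuples (C : Finset ℤ) (n : ℕ) (N m : ℤ) :
    (tuples C n N m).card = tupleCount C n N m := by
  induction n generalizing N m with
  | zero =>
    simp only [tuples, tupleCount, Matrix.dotProduct_of_isEmpty, Finset.univ_eq_empty,
      Finset.sum_empty, Fintype.piFinset_of_isEmpty, eq_comm (a := (0 : ℤ))]
    split_ifs with h <;> simp [h]
  | succ n ih =>
    rw [Finset.card_eq_sum_card_fiberwise (f := fun y => y 0) (t := C)
      fun y hy => (mem_tuples.1 hy).1 0, tupleCount]
    refine Finset.sum_congr rfl fun c hc => ?_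
    have hfiber : {y ∈ tuples C (n + 1) N m | y 0 = c} =
        (tuples C n (N - c ^ 2) (m - c)).image (Fin.cons (α := fun _ => ℤ) c) := by
      ext y
      simp only [Finset.mem_filter, Finset.mem_image, ← cons_mem_tuples hc]
      constructor
      · rintro ⟨hy, rfl⟩
        exact ⟨Fin.tail y, by rwa [Fin.cons_self_tail], Fin.cons_self_tail y⟩
      · rintro ⟨z, hz, rfl⟩
        exact ⟨hz, Fin.cons_zero ..⟩
    rw [hfiber, Finset.card_image_of_injective _ (Fin.cons_right_injective (α := fun _ => ℤ) c)]
    split_ifs with hcN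
    · exact ih ..
    · refine Finset.card_eq_zero.2 (Finset.eq_empty_of_forall_notMem fun y hy => hcN ?_)
      rw [← sub_nonneg, ← (mem_tuples.1 hy).2.1]
      exact Finset.sum_nonneg fun i _ => mul_self_nonneg (y i)

lemma IsQuadrupledFrameVector.mem_Icc {y : Fin 8 → ℤ} (hy : IsQuadrupledFrameVector y) :
    y ∈ Set.Icc (-4) 4 := by
  have hle (i : Fin 8) : y i ^ 2 ≤ 4 ^ 2 := by
    rw [show (4 : ℤ) ^ 2 = y ⬝ᵥ y from hy.2.symm, sq]
    exact Finset.single_le_sum (f := fun i => y i * y i) (fun i _ => mul_self_nonneg (y i))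
      (Finset.mem_univ i)
  have hbound (i : Fin 8) := abs_le_of_sq_le_sq' (hle i) (by norm_num)
  exact ⟨fun i => (hbound i).1, fun i => (hbound i).2⟩

lemma finite_setOf_isFrameVector : {a | IsFrameVector a}.Finite :=
  ((Set.finite_Icc (-4) 4).image quarter).subset fun _ ha =>
    let ⟨y, hy, hay⟩ := ha.exists_eq_quarter
    ⟨y, hy.mem_Icc, hay.symm⟩

lemma isQuadrupledFrameVector_iff {y : Fin 8 → ℤ} {m : ℤ} (hm : ∑ i, y i = 4 * m) :
    IsQuadrupledFrameVector y ↔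
      y ∈ tuples {-4, -2, 0, 2, 4} 8 16 (4 * m) ∪ tuples {-3, -1, 1, 3} 8 16 (4 * m) := by
  simp only [Finset.mem_union, mem_tuples, hm, and_true, ← or_and_right]
  constructor
  · intro hy
    refine ⟨(Int.emod_two_eq_zero_or_one (y 0)).imp (fun h0 i => ?_) (fun h0 i => ?_), hy.2⟩ <;>
      have hparity := hy.1.1 i <;> have hlower : -4 ≤ y i := hy.mem_Icc.1 i <;>
      have hupper : y i ≤ 4 := hy.mem_Icc.2 i <;>
      simp only [Finset.mem_insert, Finset.mem_singleton] <;> lia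
  · rintro ⟨h, hnorm⟩
    refine ⟨⟨fun i => ?_, ⟨m, hm⟩⟩, hnorm⟩
    rcases h with h | h <;> have h0 := h 0 <;> have hi := h i <;>
      simp only [Finset.mem_insert, Finset.mem_singleton] at h0 hi <;> lia

/-- The frame vectors on which `φ` takes the value `m / 2`. -/
def frameVectors (m : ℤ) : Set V8 := {a | IsFrameVector a ∧ phi8 ⬝ᵥ a = m / 2}

lemma frameVectors_eq_image (m : ℤ) : frameVectors m = quarter ''
    ↑(tuples {-4, -2, 0, 2, 4} 8 16 (4 * m) ∪ tuples {-3, -1, 1, 3} 8 16 (4 * m)) := by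
  have hsum {y : Fin 8 → ℤ} : phi8 ⬝ᵥ quarter y = m / 2 ↔ ∑ i, y i = 4 * m := by
    rw [phi8_dotProduct_quarter, div_eq_div_iff (by norm_num) two_ne_zero, ← Int.cast_inj (α := ℂ)]
    push_cast
    exact ⟨fun h => by linear_combination h / 2, fun h => by linear_combination 2 * h⟩
  ext a
  constructor
  · rintro ⟨ha, hphi⟩
    obtain ⟨y, hy, rfl⟩ := ha.exists_eq_quarter
    exact ⟨y, (isQuadrupledFrameVector_iff (hsum.1 hphi)).1 hy, rfl⟩
  · rintro ⟨y, hy, rfl⟩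
    have hy_sum : ∑ i, y i = 4 * m :=
      (Finset.mem_union.1 hy).elim (fun h => (mem_tuples.1 h).2.2) fun h => (mem_tuples.1 h).2.2
    exact ⟨isFrameVector_quarter_iff.2 ((isQuadrupledFrameVector_iff hy_sum).2 hy),
      hsum.2 hy_sum⟩

lemma ncard_frameVectors (m : ℤ) : (frameVectors m).ncard =
    tupleCount {-4, -2, 0, 2, 4} 8 16 (4 * m) + tupleCount {-3, -1, 1, 3} 8 16 (4 * m) := by
  rw [frameVectors_eq_image, Set.ncard_image_of_injective _ quarter_injective,
    Set.ncard_coe_finset, Finset.card_union_of_disjoint, card_tuples, card_tuples]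
  refine Finset.disjoint_left.2 fun y hy hy' => ?_
  have h := (mem_tuples.1 hy).1 0
  have h' := (mem_tuples.1 hy').1 0
  simp only [Finset.mem_insert, Finset.mem_singleton] at h h'
  lia

/-! ### Counting frames -/

lemma ncard_mul_eq_ncard_mul {α β : Type*} {s : Set α} {t : Set β} (hs : s.Finite) (ht : t.Finite)
    {r : α → β → Prop} {m n : ℕ} (hm : ∀ a ∈ s, {b ∈ t | r a b}.ncard = m)
    (hn : ∀ b ∈ t, {a ∈ s | r a b}.ncard = n) : s.ncard * m = t.ncard * n := by
  classical
  lift s to Finset α using hs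
  lift t to Finset β using ht
  simp only [Set.ncard_coe_finset]
  refine Finset.card_mul_eq_card_mul r (fun a ha => ?_) fun b hb => ?_
  · rw [← hm a ha, Finset.bipartiteAbove, ← Set.ncard_coe_finset, Finset.coe_filter]
    rfl
  · rw [← hn b hb, Finset.bipartiteBelow, ← Set.ncard_coe_finset, Finset.coe_filter]
    rfl

namespace C3Type

/-- The set of `C₃`-frames of type `t`. -/
def frames (t : C3Type) : Set (Set V8) := {A | IsClFrame 3 A ∧ t.Holds A}

/-- Twice the largest value of `φ` on a frame of type `t`. -/
def doubledMax : C3Type → ℤ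
  | .I => 1
  | .II0 => 0
  | .II1 | .II2 => 2

/-- The number of vectors of a frame of type `t` on which `φ` takes its largest value. -/
def maxCount : C3Type → ℕ
  | .I => 3
  | .II0 => 6
  | .II1 => 1
  | .II2 => 2

/-- The number of frames of type `t` through a frame vector on which `φ` takes the largest value
it has on such frames. -/
def framesThroughCount : C3Type → ℕ
  | .I => 21
  | .II0 => 10
  | .II1 => 15
  | .II2 => 6

/-- The number of frames of type `t`. -/
def frameCount : C3Type → ℕ
  | .I => 4032
  | .II0 => 1260
  | .II1 => 1890
  | .II2 => 378

lemma finite_frames (t : C3Type) : t.frames.Finite :=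
  finite_setOf_isFrameVector.finite_subsets.subset fun _ hA _ => hA.1.isFrameVector

lemma ncard_frameVectors_mem {t : C3Type} {A : Set V8} (hA : A ∈ t.frames) :
    {a ∈ frameVectors t.doubledMax | a ∈ A}.ncard = t.maxCount := by
  have hsep : {a ∈ frameVectors t.doubledMax | a ∈ A} =
      {a ∈ A | ip phi8 a = t.doubledMax / 2} := by
    ext a
    exact ⟨fun h => ⟨h.2, h.1.2⟩, fun h => ⟨⟨hA.1.isFrameVector h.1, h.2⟩, h.1⟩⟩
  obtain ⟨w, hw, κ, S, hS, hwA⟩ := hA.1.exists_mem_WE7_image_eq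
  have hmap : S.val.map (doubledStdFrameValue κ) = t.doubledValues := by
    rw [← holds_frameOf_stdFrame_iff t κ hS, ← hwA, holds_image_iff t hw]
    exact hA.2
  have hcount (m : ℤ) : (S.filter fun j => doubledStdFrameValue κ j = m).card =
      t.doubledValues.count m := by
    rw [← hmap, Multiset.count_map]
    simp only [eq_comm (a := m)]
    rfl
  rw [hsep, ← ncard_sep_ip_image hw, hwA, ncard_sep_frameOf_stdFrame κ S rfl, hcount, hcount]
  cases t <;> decide

/-- The three-element sets `S` for which `frameOf (stdFrame κ) S` is a frame of type `t`. -/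
def indexSets (t : C3Type) (κ : FrameKind) : Finset (Finset (Fin 8)) :=
  {S | S.card = 3 ∧ S.val.map (doubledStdFrameValue κ) = t.doubledValues}

lemma mem_indexSets {t : C3Type} {κ : FrameKind} {S : Finset (Fin 8)} :
    S ∈ t.indexSets κ ↔ S.card = 3 ∧ t.Holds (frameOf (stdFrame κ) S) := by
  rw [indexSets, Finset.mem_filter_univ]
  exact and_congr_right fun hS => (holds_frameOf_stdFrame_iff t κ hS).symm

lemma card_filter_mem_indexSets (t : C3Type) (κ : FrameKind) {j : Fin 8}
    (hj : doubledStdFrameValue κ j = t.doubledMax ∨ doubledStdFrameValue κ j = -t.doubledMax) :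
    ((t.indexSets κ).filter (j ∈ ·)).card = t.framesThroughCount := by
  revert j
  cases t <;> cases κ <;> decide +kernel

lemma ncard_frames_mem_neg (t : C3Type) (a : V8) :
    {A ∈ t.frames | -a ∈ A}.ncard = {A ∈ t.frames | a ∈ A}.ncard := by
  congr 1
  ext A
  exact and_congr_right fun hA => ⟨fun h => neg_neg a ▸ hA.1.neg_mem h, hA.1.neg_mem⟩

lemma ncard_frames_mem_map (t : C3Type) {w : V8 ≃ₗ[ℂ] V8} (hw : w ∈ WE7) (a : V8) :
    {A ∈ t.frames | w a ∈ A}.ncard = {A ∈ t.frames | a ∈ A}.ncard := by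
  rw [← Set.ncard_image_of_injective {A ∈ t.frames | a ∈ A} w.injective.image_injective]
  congr 1
  ext B
  constructor
  · rintro ⟨⟨hB, htB⟩, ha⟩
    obtain ⟨A, rfl⟩ := w.surjective.image_surjective B
    have hA : IsClFrame 3 A := by
      have h := hB.image (inv_mem hw)
      rwa [show (w⁻¹ : V8 ≃ₗ[ℂ] V8) '' (w '' A) = A from w.toEquiv.symm_image_image A] at h
    exact ⟨A, ⟨⟨hA, (holds_image_iff t hw A).1 htB⟩, w.injective.mem_set_image.1 ha⟩, rfl⟩
  · rintro ⟨A, ⟨⟨hA, htA⟩, ha⟩, rfl⟩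
    exact ⟨⟨hA.image hw, (holds_image_iff t hw A).2 htA⟩, Set.mem_image_of_mem w ha⟩

lemma ncard_frames_stdFrame_mem (t : C3Type) (κ : FrameKind) (j : Fin 8) :
    {A ∈ t.frames | stdFrame κ j ∈ A}.ncard = ((t.indexSets κ).filter (j ∈ ·)).card := by
  have hv := isFrameFamily_stdFrame κ
  rw [← Set.ncard_coe_finset, ← Set.ncard_image_of_injective _ hv.orthonormal.frameOf_injective]
  congr 1
  ext A
  simp only [Set.mem_image, Finset.coe_filter, Set.mem_ofPred_eq, mem_indexSets]
  constructor
  · rintro ⟨⟨hA, ht⟩, hj⟩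
    obtain ⟨S, hS, rfl⟩ := hv.exists_eq_frameOf hA hj
    exact ⟨S, ⟨⟨hS, ht⟩, hv.orthonormal.mem_frameOf_iff.1 hj⟩, rfl⟩
  · rintro ⟨S, ⟨⟨hS, ht⟩, hj⟩, rfl⟩
    exact ⟨⟨hS ▸ hv.isClFrame_frameOf S, ht⟩, hv.orthonormal.mem_frameOf_iff.2 hj⟩

lemma ncard_frames_mem {t : C3Type} {a : V8} (ha : a ∈ frameVectors t.doubledMax) :
    {A ∈ t.frames | a ∈ A}.ncard = t.framesThroughCount := by
  obtain ⟨w, hw, κ, j, hwa⟩ := exists_mem_WE7_stdFrame ha.1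
  have hphi := (phi8_dotProduct_map_of_mem_WE7 hw a).trans ha.2
  rw [← ncard_frames_mem_map t hw]
  rcases hwa with hwa | hwa <;>
    simp only [hwa, dotProduct_neg, phi8_dotProduct_stdFrame, ← neg_div,
      div_left_inj' (two_ne_zero' ℂ)] at hphi
  · rw [hwa, ncard_frames_stdFrame_mem]
    exact card_filter_mem_indexSets t κ (.inl (mod_cast hphi))
  · rw [hwa, ncard_frames_mem_neg, ncard_frames_stdFrame_mem]
    exact card_filter_mem_indexSets t κ (.inr (neg_eq_iff_eq_neg.1 (mod_cast hphi)))

lemma ncard_frames (t : C3Type) : t.frames.ncard = t.frameCount := by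
  have hcount : t.frames.ncard * t.maxCount =
      (frameVectors t.doubledMax).ncard * t.framesThroughCount :=
    ncard_mul_eq_ncard_mul t.finite_frames (finite_setOf_isFrameVector.subset fun _ ha => ha.1)
      (r := fun A a => a ∈ A) (fun _ => ncard_frameVectors_mem) fun _ => ncard_frames_mem
  rw [ncard_frameVectors] at hcount
  refine Nat.eq_of_mul_eq_mul_right (by cases t <;> decide) (hcount.trans ?_)
  cases t <;> decide +kernel

end C3Type

/-- Proposition 3.2: every `C₃`-frame is of exactly one of the four types
I, II₀, II₁, II₂; the numbers of frames of each type are `4032`, `1260`, `1890`, `378`;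
and each of the four families is a single `W(E₇)`-orbit. -/
theorem statement7 :
    (∀ A : Set V8, IsClFrame 3 A →
      (C3TypeI A ∨ C3TypeII0 A ∨ C3TypeII1 A ∨ C3TypeII2 A) ∧
      ¬(C3TypeI A ∧ C3TypeII0 A) ∧ ¬(C3TypeI A ∧ C3TypeII1 A) ∧
      ¬(C3TypeI A ∧ C3TypeII2 A) ∧ ¬(C3TypeII0 A ∧ C3TypeII1 A) ∧
      ¬(C3TypeII0 A ∧ C3TypeII2 A) ∧ ¬(C3TypeII1 A ∧ C3TypeII2 A)) ∧
    {A : Set V8 | IsClFrame 3 A ∧ C3TypeI A}.ncard = 4032 ∧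
    {A : Set V8 | IsClFrame 3 A ∧ C3TypeII0 A}.ncard = 1260 ∧
    {A : Set V8 | IsClFrame 3 A ∧ C3TypeII1 A}.ncard = 1890 ∧
    {A : Set V8 | IsClFrame 3 A ∧ C3TypeII2 A}.ncard = 378 ∧
    (∀ w : V8 ≃ₗ[ℂ] V8, w ∈ WE7 → ∀ A : Set V8,
      (IsClFrame 3 A ∧ C3TypeI A → IsClFrame 3 (⇑w '' A) ∧ C3TypeI (⇑w '' A)) ∧
      (IsClFrame 3 A ∧ C3TypeII0 A → IsClFrame 3 (⇑w '' A) ∧ C3TypeII0 (⇑w '' A)) ∧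
      (IsClFrame 3 A ∧ C3TypeII1 A → IsClFrame 3 (⇑w '' A) ∧ C3TypeII1 (⇑w '' A)) ∧
      (IsClFrame 3 A ∧ C3TypeII2 A → IsClFrame 3 (⇑w '' A) ∧ C3TypeII2 (⇑w '' A))) ∧
    (∀ A B : Set V8, IsClFrame 3 A → IsClFrame 3 B →
      ((C3TypeI A ∧ C3TypeI B) ∨ (C3TypeII0 A ∧ C3TypeII0 B) ∨
        (C3TypeII1 A ∧ C3TypeII1 B) ∨ (C3TypeII2 A ∧ C3TypeII2 B)) →
      ∃ w : V8 ≃ₗ[ℂ] V8, w ∈ WE7 ∧ ⇑w '' A = B) := by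
  refine ⟨fun A hA => ?_, C3Type.ncard_frames .I, C3Type.ncard_frames .II0,
    C3Type.ncard_frames .II1, C3Type.ncard_frames .II2, fun w hw A => ?_, fun A B hA hB h => ?_⟩
  · obtain ⟨t, ht, huniq⟩ := C3Type.existsUnique_holds hA
    have hdisjoint {s s' : C3Type} (hne : s ≠ s') : ¬(s.Holds A ∧ s'.Holds A) := fun h =>
      hne ((huniq s h.1).trans (huniq s' h.2).symm)
    refine ⟨?_, hdisjoint (s := .I) (s' := .II0) nofun, hdisjoint (s := .I) (s' := .II1) nofun,
      hdisjoint (s := .I) (s' := .II2) nofun, hdisjoint (s := .II0) (s' := .II1) nofun,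
      hdisjoint (s := .II0) (s' := .II2) nofun, hdisjoint (s := .II1) (s' := .II2) nofun⟩
    cases t
    exacts [.inl ht, .inr (.inl ht), .inr (.inr (.inl ht)), .inr (.inr (.inr ht))]
  · have himage (t : C3Type) (h : IsClFrame 3 A ∧ t.Holds A) :
        IsClFrame 3 (w '' A) ∧ t.Holds (w '' A) := ⟨h.1.image hw, (t.holds_image_iff hw A).2 h.2⟩
    exact ⟨himage .I, himage .II0, himage .II1, himage .II2⟩
  · obtain ⟨t, htA, htB⟩ : ∃ t : C3Type, t.Holds A ∧ t.Holds B := by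
      rcases h with h | h | h | h
      exacts [⟨.I, h⟩, ⟨.II0, h⟩, ⟨.II1, h⟩, ⟨.II2, h⟩]
    exact C3Type.exists_mem_WE7_image_eq_of_holds hA hB htA htB
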